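/- In the Section 3 setup, there exist indices i and j with j − i modulo 2lh lying in {(l+d)h, (l−d)h} such that b_k = 0 for every index k distinct from i and j; that is, N(x) = b_i·x^(p^i) + b_j·x^(p^j). -/

import Mathlib

/-!
Write `n = 2lh`, `m = lh`, `x̄ = x^(q^l)`, so that `x ↦ x̄` is an involution of `F`, and index the
powers of Frobenius by `ZMod n`. Adding to `N(x) ∗ N(y)` its conjugate kills the part along `ω` and
leaves `2 (N(x)̄ N(y) + N(x) N(y)̄)`. By the isotopism this is also an additive function of
`x ∗_d y`; additive functions are `p`-polynomials, so only monomials `x^(p^i) y^(p^j)` with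
`i - j ∈ {m, dh, -dh}` occur in it (`bh_trace_mem_span`).

The monomials `x^(p^i) y^(p^j)` are distinct multiplicative characters of `F × F`, hence linearly
independent by Dedekind, and coefficients can be compared: with `c_i` the coefficients of `N̄`,
`b_i c_j + c_i b_j = 0` unless `i - j ∈ {m, dh, -dh}`. Since `c_i = 0` iff `b_{i-m} = 0`, the
diagonal `i = j` shows that `b_i` and `b_{i+m}` are never both nonzero, and then the remaining
equations show that two indices of the support of `b` differ by `0` or `±δ`, with `δ = (l+d)h`
(`support_sub_mem`). Finally `2δ ≠ 0` and `3δ ≠ 0` modulo `n`, because `l ∤ d` and `l + d` is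
coprime to `2l`; so such a support lies in a pair `{i, i + δ}` (`exists_pair_of_differences`).
-/

/-- The Budaghyan–Helleseth multiplication `x ∗_{(e,β)} y` on `F = GF(q^(2l))`,
relative to a fixed `ω` with `ω + ω^(q^l) = 0`. -/
def bhMul {F : Type*} [Field F] (q l e : ℕ) (β ω x y : F) : F :=
  x ^ q ^ l * y + x * y ^ q ^ l +
    (β * (x ^ q ^ e * y + x * y ^ q ^ e) +
      β ^ q ^ l * (x ^ q ^ e * y + x * y ^ q ^ e) ^ q ^ l) * ω

/-! ### Frobenius powers and bilinear monomials -/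

/-- The Frobenius power `x ↦ x^(p^i)` with exponent `i` modulo `n`, through its representative in
`[0, n)`. On a field of `p^n` elements the choice of representative does not matter. -/
def frob (F : Type*) [Field F] (p n : ℕ) [ExpChar F p] (i : ZMod n) : F →+* F :=
  iterateFrobenius F p i.val

section frob

variable {F : Type*} [Field F] {p n : ℕ} [hp : Fact p.Prime] [CharP F p]

/-- The bilinear monomial `(x, y) ↦ x^(p^i) y^(p^j)`. It is encoded as a monoid homomorphism on
`F × F` so that Dedekind's theorem applies to the whole family. -/
def biMono (F : Type*) [Field F] (p n : ℕ) [ExpChar F p] (s : ZMod n × ZMod n) : F × F →* F :=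
  ((frob F p n s.1 : F →* F).comp (MonoidHom.fst F F)) *
    ((frob F p n s.2 : F →* F).comp (MonoidHom.snd F F))

theorem biMono_apply (s : ZMod n × ZMod n) (z : F × F) :
    biMono F p n s z = frob F p n s.1 z.1 * frob F p n s.2 z.2 := rfl

/-- The functions `F × F → F` all of whose bilinear monomials `x^(p^i) y^(p^j)` have
`i - j ∈ {m, e, -e}`. -/
def biSpan (F : Type*) [Field F] (p n : ℕ) [ExpChar F p] (m e : ZMod n) :
    Submodule F (F × F → F) :=
  Submodule.span F ((fun s => (biMono F p n s : F × F → F)) ''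
    {s | s.1 - s.2 = m ∨ s.1 - s.2 = e ∨ s.1 - s.2 = -e})

theorem monomial_mem_biSpan {m e : ZMod n} (c : F) (i j : ZMod n)
    (h : i - j = m ∨ i - j = e ∨ i - j = -e) :
    (fun z : F × F => c * (frob F p n i z.1 * frob F p n j z.2)) ∈ biSpan F p n m e :=
  Submodule.smul_mem _ c (Submodule.subset_span ⟨(i, j), h, rfl⟩)

/-! ### Independence of the Frobenius powers and of the bilinear monomials -/

variable [Fintype F]

theorem frob_natCast (hcard : Fintype.card F = p ^ n) (k : ℕ) (x : F) :
    frob F p n (k : ZMod n) x = x ^ p ^ k := by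
  have key : ∀ t : ℕ, x ^ p ^ (k % n + n * t) = x ^ p ^ (k % n) := by
    intro t
    induction t with
    | zero => simp
    | succ t ih =>
      rw [show k % n + n * (t + 1) = (k % n + n * t) + n by ring, pow_add, pow_mul, ← hcard,
        FiniteField.pow_card, ih]
  have := key (k / n)
  rw [Nat.mod_add_div] at this
  rw [frob, iterateFrobenius_def, ZMod.val_natCast, this]

variable [NeZero n]

theorem frob_add (hcard : Fintype.card F = p ^ n) (i j : ZMod n) (x : F) :
    frob F p n (i + j) x = frob F p n i (frob F p n j x) := by
  obtain ⟨a, rfl⟩ := ZMod.natCast_zmod_surjective i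
  obtain ⟨b, rfl⟩ := ZMod.natCast_zmod_surjective j
  rw [← Nat.cast_add, frob_natCast hcard, frob_natCast hcard, frob_natCast hcard, ← pow_mul,
    ← pow_add, add_comm]

/-- Distinct exponents below `n` give distinct maps, as the polynomial `X^(p^i) - X^(p^j)` has
degree less than `|F|`. -/
theorem frob_injective (hcard : Fintype.card F = p ^ n) :
    Function.Injective (frob F p n) := by
  have hp1 := hp.out.one_lt
  intro i j hij
  apply ZMod.val_injective
  have h1 : ∀ x : F, x ^ p ^ i.val = x ^ p ^ j.val := by
    intro x
    have := DFunLike.congr_fun hij x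
    simpa [frob, iterateFrobenius_def] using this
  by_contra hne
  have hne' : p ^ i.val ≠ p ^ j.val := fun h => hne (Nat.pow_right_injective hp.out.two_le h)
  have hz : (Polynomial.X ^ p ^ i.val - Polynomial.X ^ p ^ j.val : Polynomial F) = 0 := by
    apply Polynomial.eq_zero_of_natDegree_lt_card_of_eval_eq_zero' _ Finset.univ
    · intro x _
      simp [h1 x]
    · rw [Finset.card_univ, hcard]
      refine lt_of_le_of_lt (Polynomial.natDegree_sub_le _ _) ?_
      simp only [Polynomial.natDegree_X_pow]
      exact max_lt (Nat.pow_lt_pow_right hp1 (ZMod.val_lt i))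
        (Nat.pow_lt_pow_right hp1 (ZMod.val_lt j))
  have := congrArg (fun P => Polynomial.coeff P (p ^ i.val)) hz
  simp [Polynomial.coeff_X_pow, hne'] at this

/-- Every additive map of `F` is a `p`-polynomial: the `n` Frobenius powers are linearly
independent in the `n`-dimensional `F`-space of `𝔽_p`-linear maps. -/
theorem additive_eq_sum_frob (hcard : Fintype.card F = p ^ n) (f : F → F)
    (hf : ∀ x y, f (x + y) = f x + f y) :
    ∃ a : ZMod n → F, ∀ x, f x = ∑ k, a k * frob F p n k x := by
  let _ : Algebra (ZMod p) F := ZMod.algebra F p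
  let T : ZMod n → (F →ₗ[ZMod p] F) := fun k => (frob F p n k).toAddMonoidHom.toZModLinearMap p
  have hT : LinearIndependent F T := by
    have h0 : LinearIndependent F (fun g : F →* F => (g : F → F)) := linearIndependent_monoidHom F F
    have h1 := h0.comp (fun k : ZMod n => (frob F p n k : F →* F)) (by
      intro i j hij
      apply frob_injective hcard
      ext x
      exact DFunLike.congr_fun hij x)
    rw [Fintype.linearIndependent_iff] at h1 ⊢
    intro g hg
    apply h1 g
    funext x
    have := LinearMap.congr_fun hg x
    simpa [T] using this
  have hfr : Module.finrank (ZMod p) F = n := by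
    have := Module.card_eq_pow_finrank (K := ZMod p) (V := F)
    rw [hcard, ZMod.card] at this
    exact (Nat.pow_right_injective hp.out.two_le this).symm
  have hsp : Submodule.span F (Set.range T) = ⊤ := by
    apply hT.span_eq_top_of_card_eq_finrank'
    rw [Module.finrank_linearMap_self, hfr, ZMod.card]
  let f' : F →ₗ[ZMod p] F := (AddMonoidHom.mk' f hf).toZModLinearMap p
  have hmem : f' ∈ Submodule.span F (Set.range T) := hsp ▸ Submodule.mem_top
  obtain ⟨a, ha⟩ := (Submodule.mem_span_range_iff_exists_fun F).1 hmem
  refine ⟨a, fun x => ?_⟩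
  have := LinearMap.congr_fun ha x
  simpa [T, f'] using this.symm

theorem biMono_linearIndependent (hcard : Fintype.card F = p ^ n) :
    LinearIndependent F (fun s => (biMono F p n s : F × F → F)) := by
  have h0 : LinearIndependent F (fun g : F × F →* F => (g : F × F → F)) :=
    linearIndependent_monoidHom (F × F) F
  refine h0.comp (biMono F p n) ?_
  rintro ⟨i, j⟩ ⟨i', j'⟩ h
  have hi : i = i' := by
    apply frob_injective hcard
    ext x
    simpa [biMono_apply] using DFunLike.congr_fun h (x, 1)
  have hj : j = j' := by
    apply frob_injective hcard
    ext x
    simpa [biMono_apply] using DFunLike.congr_fun h (1, x)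
  rw [hi, hj]

theorem coeff_eq_zero_of_mem_biSpan (hcard : Fintype.card F = p ^ n) {m e : ZMod n}
    (C : ZMod n × ZMod n → F)
    (hC : (∑ s, C s • (biMono F p n s : F × F → F)) ∈ biSpan F p n m e)
    {s : ZMod n × ZMod n} (hs : ¬ (s.1 - s.2 = m ∨ s.1 - s.2 = e ∨ s.1 - s.2 = -e)) :
    C s = 0 := by
  classical
  have hli := biMono_linearIndependent (F := F) (p := p) (n := n) hcard
  obtain ⟨g, hg, hgC⟩ := (Finsupp.mem_span_image_iff_linearCombination F).1 hC
  have hg0 : g s = 0 := by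
    by_contra hne
    exact hs (hg (Finsupp.mem_support_iff.2 hne))
  have : g = Finsupp.equivFunOnFinite.symm C := by
    apply hli
    rw [hgC, Finsupp.linearCombination_apply, Finsupp.sum_fintype _ _ (by simp)]
    rfl
  rw [this] at hg0
  simpa using hg0

/-! ### The monomials of the isotopism -/

/-- A `p`-polynomial in the product `x ∗_e y` only contains the monomials of `biSpan`: raising to
the power `p^k` shifts both exponents of a monomial by `k`, so that their difference is kept. -/
theorem additive_bhMul_mem (hcard : Fintype.card F = p ^ n) {h l d q : ℕ} (hq : q = p ^ h)
    (hn : n = 2 * l * h) (β ω : F) (f : F → F) (hf : ∀ x y, f (x + y) = f x + f y) :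
    (fun z : F × F => f (bhMul q l d β ω z.1 z.2)) ∈
      biSpan F p n ((l * h : ℕ) : ZMod n) ((d * h : ℕ) : ZMod n) := by
  set m : ZMod n := ((l * h : ℕ) : ZMod n) with hm
  set e : ZMod n := ((d * h : ℕ) : ZMod n) with he
  have hmm : m + m = 0 := by
    rw [hm, ← Nat.cast_add, show l * h + l * h = n by rw [hn]; ring, ZMod.natCast_self]
  have hql : ∀ x : F, x ^ q ^ l = frob F p n m x := fun x => by
    rw [hm, frob_natCast hcard, hq, ← pow_mul, mul_comm]
  have hqd : ∀ x : F, x ^ q ^ d = frob F p n e x := fun x => by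
    rw [he, frob_natCast hcard, hq, ← pow_mul, mul_comm]
  obtain ⟨a, ha⟩ := additive_eq_sum_frob hcard f hf
  have hfun : (fun z : F × F => f (bhMul q l d β ω z.1 z.2)) =
      ∑ k : ZMod n, (fun z : F × F => a k * frob F p n k (bhMul q l d β ω z.1 z.2)) := by
    funext z
    rw [ha, Finset.sum_apply]
  rw [hfun]
  refine Submodule.sum_mem _ fun k _ => ?_
  let φ := frob F p n
  have hk : (fun z : F × F => a k * frob F p n k (bhMul q l d β ω z.1 z.2)) =
      (fun z => a k * (φ (k + m) z.1 * φ k z.2)) + (fun z => a k * (φ k z.1 * φ (k + m) z.2)) +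
      (fun z => (a k * φ k β * φ k ω) * (φ (k + e) z.1 * φ k z.2)) +
      (fun z => (a k * φ k β * φ k ω) * (φ k z.1 * φ (k + e) z.2)) +
      (fun z => (a k * φ (k + m) β * φ k ω) * (φ (k + m + e) z.1 * φ (k + m) z.2)) +
      (fun z => (a k * φ (k + m) β * φ k ω) * (φ (k + m) z.1 * φ (k + m + e) z.2)) := by
    funext z
    simp only [bhMul, hql, hqd, φ, Pi.add_apply, frob_add hcard, map_add, map_mul]
    ring
  rw [hk]
  refine add_mem (add_mem (add_mem (add_mem (add_mem ?_ ?_) ?_) ?_) ?_) ?_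
  · exact monomial_mem_biSpan _ _ _ (Or.inl (by ring))
  · exact monomial_mem_biSpan _ _ _ (Or.inl (by linear_combination -hmm))
  · exact monomial_mem_biSpan _ _ _ (Or.inr (Or.inl (by ring)))
  · exact monomial_mem_biSpan _ _ _ (Or.inr (Or.inr (by ring)))
  · exact monomial_mem_biSpan _ _ _ (Or.inr (Or.inl (by ring)))
  · exact monomial_mem_biSpan _ _ _ (Or.inr (Or.inr (by ring)))

/-- Adding the conjugate to both sides of the isotopism removes the component along `ω`. -/
theorem bh_trace_mem_span (hcard : Fintype.card F = p ^ n) {h l d d' q : ℕ} (hq : q = p ^ h)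
    (hn : n = 2 * l * h) (β ω : F) (hωtr : ω + ω ^ q ^ l = 0) (L N : F → F)
    (hLa : ∀ x y : F, L (x + y) = L x + L y)
    (hiso : ∀ x y : F, L (bhMul q l d β ω x y) = bhMul q l d' β ω (N x) (N y)) :
    (fun z : F × F => 2 * (N z.1 ^ q ^ l * N z.2 + N z.1 * N z.2 ^ q ^ l)) ∈
      biSpan F p n ((l * h : ℕ) : ZMod n) ((d * h : ℕ) : ZMod n) := by
  set m : ZMod n := ((l * h : ℕ) : ZMod n) with hm
  have hmm : m + m = 0 := by
    rw [hm, ← Nat.cast_add, show l * h + l * h = n by rw [hn]; ring, ZMod.natCast_self]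
  have hql : ∀ x : F, x ^ q ^ l = frob F p n m x := fun x => by
    rw [hm, frob_natCast hcard, hq, ← pow_mul, mul_comm]
  have hinv : ∀ x : F, frob F p n m (frob F p n m x) = x := fun x => by
    rw [← frob_add hcard, hmm]
    simpa using frob_natCast hcard 0 x
  have hω' : frob F p n m ω = -ω := by
    rw [hql] at hωtr
    exact eq_neg_of_add_eq_zero_right hωtr
  have := additive_bhMul_mem hcard (d := d) hq hn β ω (fun t => L t + frob F p n m (L t))
    (fun x y => by simp only [hLa, map_add]; ring)
  convert this using 2 with z
  simp only [hiso]
  simp only [bhMul, hql, map_add, map_mul, hinv, hω']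
  ring

/-! ### The support of `N` -/

/-- Two indices in the support of a `p`-polynomial `N` differ by `0` or `±(m + e)`, as soon as
`2 (N̄(x) N(y) + N(x) N̄(y))` lies in `biSpan`, where `N̄(x) = N(x)^(p^m)` and `2m = 0`. -/
theorem support_sub_mem (hcard : Fintype.card F = p ^ n) (hp2 : (2 : F) ≠ 0) {m e : ZMod n}
    (hm0 : m ≠ 0) (he0 : e ≠ 0) (hmm : m + m = 0) (N : F → F) (B : ZMod n → F)
    (hN : ∀ x, N x = ∑ i, B i * frob F p n i x)
    (hmem : (fun z : F × F => 2 * (frob F p n m (N z.1) * N z.2 + N z.1 * frob F p n m (N z.2))) ∈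
      biSpan F p n m e) {i j : ZMod n} (hi : B i ≠ 0) (hj : B j ≠ 0) :
    i - j = 0 ∨ i - j = m + e ∨ i - j = -(m + e) := by
  -- The coefficients of the conjugate of `N`.
  let c : ZMod n → F := fun i => frob F p n m (B (i + m))
  have hNbar : ∀ x, frob F p n m (N x) = ∑ i, c i * frob F p n i x := by
    intro x
    rw [hN, map_sum, ← Equiv.sum_comp (Equiv.addRight m) (fun i => c i * frob F p n i x)]
    refine Finset.sum_congr rfl fun i _ => ?_
    simp only [c, Equiv.coe_addRight, map_mul, add_assoc, hmm, add_zero]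
    rw [add_comm i m, frob_add hcard]
  have hcoef : ∀ i j : ZMod n, ¬ (i - j = m ∨ i - j = e ∨ i - j = -e) →
      c i * B j + B i * c j = 0 := by
    intro i j hij
    have h0 := coeff_eq_zero_of_mem_biSpan hcard
      (fun s => 2 * (c s.1 * B s.2 + B s.1 * c s.2)) (m := m) (e := e) (by
        convert hmem using 1
        funext z
        rw [hNbar, hNbar, hN, hN, Finset.sum_mul_sum, Finset.sum_mul_sum, Finset.sum_apply,
          Fintype.sum_prod_type, ← Finset.sum_add_distrib, Finset.mul_sum]
        refine Finset.sum_congr rfl fun i _ => ?_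
        rw [← Finset.sum_add_distrib, Finset.mul_sum]
        refine Finset.sum_congr rfl fun j _ => ?_
        simp only [Pi.smul_apply, smul_eq_mul, biMono_apply]
        ring) (s := (i, j)) hij
    exact (mul_eq_zero.1 h0).resolve_left hp2
  have hci : c i = 0 := by
    have h0 := hcoef i i (by
      simp only [sub_self]
      rintro (h | h | h)
      · exact hm0 h.symm
      · exact he0 h.symm
      · exact he0 (neg_eq_zero.1 h.symm))
    have h1 : 2 * (B i * c i) = 0 := by rw [← h0]; ring
    exact (mul_eq_zero.1 ((mul_eq_zero.1 h1).resolve_left hp2)).resolve_left hi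
  have hcj : c (j + m) ≠ 0 := by
    simp only [c, add_assoc, hmm, add_zero]
    exact (map_ne_zero _).2 hj
  by_contra hcon
  have h0 := hcoef i (j + m) (by
    rintro (h | h | h)
    · exact hcon (Or.inl (by linear_combination h + hmm))
    · exact hcon (Or.inr (Or.inl (by linear_combination h)))
    · exact hcon (Or.inr (Or.inr (by linear_combination h + hmm))))
  rw [hci, zero_mul, zero_add] at h0
  exact (mul_ne_zero hi hcj) h0

end frob

theorem exists_pair_of_differences {G : Type*} [CommRing G] (S : Set G) (δ : G)
    (h2 : 2 * δ ≠ 0) (h3 : 3 * δ ≠ 0)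
    (hS : ∀ i ∈ S, ∀ j ∈ S, i - j = 0 ∨ i - j = δ ∨ i - j = -δ) :
    ∃ i j : G, j - i = δ ∧ ∀ k ∈ S, k = i ∨ k = j := by
  by_cases hex : ∃ i ∈ S, ∃ j ∈ S, j - i = δ
  · obtain ⟨i, hi, j, hj, hij⟩ := hex
    refine ⟨i, j, hij, fun k hk => ?_⟩
    rcases hS k hk i hi with h | h | h
    · exact Or.inl (sub_eq_zero.1 h)
    · exact Or.inr (by linear_combination h - hij)
    · exfalso
      -- Here `k - j = -2δ`.
      rcases hS k hk j hj with h' | h' | h'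
      · exact h2 (by linear_combination h - hij - h')
      · exact h3 (by linear_combination h - hij - h')
      · exact h2 (by linear_combination 2 * (h - hij - h'))
  · by_cases hne : S.Nonempty
    · obtain ⟨i, hi⟩ := hne
      refine ⟨i, i + δ, by ring, fun k hk => ?_⟩
      rcases hS k hk i hi with h | h | h
      · exact Or.inl (sub_eq_zero.1 h)
      · exact absurd ⟨i, hi, k, hk, h⟩ hex
      · exact absurd ⟨k, hk, i, hi, by linear_combination -h⟩ hex
    · exact ⟨0, δ, by ring, fun k hk => absurd ⟨k, hk⟩ hne⟩

/-- Section 3 setup: there exist indices i and j with j − i modulo 2lh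
lying in {(l+d)h, (l−d)h} such that b_k = 0 for every index k distinct from i and j;
that is, N(x) = b_i·x^(p^i) + b_j·x^(p^j). -/
theorem bh_N_two_terms (p h l d d' q : ℕ) (hp : p.Prime) (hpodd : Odd p)
    (hh : 0 < h) (hq : q = p ^ h) (hl : 2 < l)
    (hd1 : 1 ≤ d) (hd2 : d ≤ l - 1) (hgd : Nat.gcd l d = 1) (hod : Odd (l + d))
    (hd'1 : 1 ≤ d') (hd'2 : d' ≤ l - 1) (hgd' : Nat.gcd l d' = 1) (hod' : Odd (l + d'))
    (F : Type*) [Field F] [Fintype F] (hcard : Fintype.card F = q ^ (2 * l))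
    (β ω : F) (hβ : ∀ w : F, β ≠ w ^ 2) (hω : ω ≠ 0) (hωtr : ω + ω ^ q ^ l = 0)
    (L N : F → F) (hLb : Function.Bijective L) (hLa : ∀ x y : F, L (x + y) = L x + L y)
    (hNb : Function.Bijective N) (hNa : ∀ x y : F, N (x + y) = N x + N y)
    (hiso : ∀ x y : F, L (bhMul q l d β ω x y) = bhMul q l d' β ω (N x) (N y))
    (b : ℕ → F) (hbper : ∀ i : ℕ, b (i + 2 * l * h) = b i)
    (hNc : ∀ x : F, N x = ∑ i ∈ Finset.range (2 * l * h), b i * x ^ p ^ i)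
    :
    ∃ i j : ℕ, i < 2 * l * h ∧ j < 2 * l * h ∧
      ((j : ZMod (2 * l * h)) - (i : ZMod (2 * l * h))) ∈
        ({(((l + d) * h : ℕ) : ZMod (2 * l * h)),
          (((l - d) * h : ℕ) : ZMod (2 * l * h))} : Set (ZMod (2 * l * h))) ∧
      (∀ k : ℕ, k < 2 * l * h → k ≠ i → k ≠ j → b k = 0) ∧
      ∀ x : F, N x = b i * x ^ p ^ i + b j * x ^ p ^ j := by
  obtain ⟨n, hn⟩ : ∃ n, n = 2 * l * h := ⟨_, rfl⟩
  rw [← hn] at hNc ⊢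
  have hn0 : n ≠ 0 := by rw [hn]; positivity
  have : NeZero n := ⟨hn0⟩
  have : Fact p.Prime := ⟨hp⟩
  have hcard' : Fintype.card F = p ^ n := by
    rw [hcard, hq, ← pow_mul, hn]
    congr 1
    ring
  have : CharP F p := charP_of_card_eq_prime_pow hcard'
  have hp2 : (2 : F) ≠ 0 := by
    apply Ring.two_ne_zero
    rw [ringChar.eq F p]
    rintro rfl
    exact absurd hpodd (by decide)
  have hdl : d < l := by omega
  have hdvd : ∀ k : ℕ, ((k * h : ℕ) : ZMod n) = 0 → 2 * l ∣ k := by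
    intro k hk
    rw [ZMod.natCast_eq_zero_iff, hn] at hk
    exact Nat.dvd_of_mul_dvd_mul_right hh hk
  have hm0 : ((l * h : ℕ) : ZMod n) ≠ 0 := fun h0 => by
    have := Nat.le_of_dvd (by omega) (hdvd _ h0)
    omega
  have he0 : ((d * h : ℕ) : ZMod n) ≠ 0 := fun h0 => by
    have := Nat.le_of_dvd (by omega) (hdvd _ h0)
    omega
  have hmm : ((l * h : ℕ) : ZMod n) + ((l * h : ℕ) : ZMod n) = 0 := by
    rw [← Nat.cast_add, show l * h + l * h = n by rw [hn]; ring, ZMod.natCast_self]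
  have hδ : ((l * h : ℕ) : ZMod n) + ((d * h : ℕ) : ZMod n) = (((l + d) * h : ℕ) : ZMod n) := by
    push_cast
    ring
  have h2δ : 2 * (((l + d) * h : ℕ) : ZMod n) ≠ 0 := fun h0 => by
    have h1 := hdvd (2 * (l + d)) (by push_cast at h0 ⊢; linear_combination h0)
    have h2 : l ∣ l + d := Nat.dvd_of_mul_dvd_mul_left two_pos h1
    have := Nat.le_of_dvd (by omega) ((Nat.dvd_add_right (dvd_refl l)).1 h2)
    omega
  have h3δ : 3 * (((l + d) * h : ℕ) : ZMod n) ≠ 0 := fun h0 => by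
    have h1 := hdvd (3 * (l + d)) (by push_cast at h0 ⊢; linear_combination h0)
    have hc : Nat.Coprime (2 * l) (l + d) := by
      apply Nat.Coprime.mul_left
      · exact (Nat.coprime_two_left).2 hod
      · simpa using hgd
    have := Nat.le_of_dvd (by omega) (hc.dvd_of_dvd_mul_right h1)
    omega
  have hN : ∀ x, N x = ∑ i : ZMod n, b i.val * frob F p n i x := by
    intro x
    rw [hNc]
    refine Finset.sum_bij' (fun i _ => (i : ZMod n)) (fun i _ => i.val) ?_ ?_ ?_ ?_ ?_
    · simp
    · intro i _
      exact Finset.mem_range.2 (ZMod.val_lt i)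
    · intro i hi
      exact ZMod.val_cast_of_lt (Finset.mem_range.1 hi)
    · intro i _
      exact ZMod.natCast_zmod_val i
    · intro i hi
      rw [frob_natCast hcard', ZMod.val_cast_of_lt (Finset.mem_range.1 hi)]
  have hmem := bh_trace_mem_span hcard' hq hn β ω hωtr L N hLa hiso
  have hql : ∀ x : F, x ^ q ^ l = frob F p n ((l * h : ℕ) : ZMod n) x := fun x => by
    rw [frob_natCast hcard', hq, ← pow_mul, mul_comm]
  simp only [hql] at hmem
  obtain ⟨i, j, hij, hS⟩ := exists_pair_of_differences {i : ZMod n | b i.val ≠ 0}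
    (((l + d) * h : ℕ) : ZMod n) h2δ h3δ (fun i hi j hj => by
      rw [← hδ]
      exact support_sub_mem hcard' hp2 hm0 he0 hmm N (fun i => b i.val) hN hmem hi hj)
  have hzero : ∀ k : ZMod n, k ≠ i → k ≠ j → b k.val = 0 := by
    intro k hki hkj
    by_contra hk
    rcases hS k hk with h | h
    · exact hki h
    · exact hkj h
  refine ⟨i.val, j.val, ZMod.val_lt i, ZMod.val_lt j, ?_, ?_, ?_⟩
  · rw [ZMod.natCast_zmod_val, ZMod.natCast_zmod_val]
    exact Or.inl hij
  · intro k hk hki hkj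
    have hkv : ((k : ZMod n)).val = k := ZMod.val_cast_of_lt hk
    rw [← hkv]
    apply hzero
    · rintro rfl
      exact hki hkv.symm
    · rintro rfl
      exact hkj hkv.symm
  · intro x
    have hne : i ≠ j := by
      rintro rfl
      apply h2δ
      rw [← hij]
      ring
    rw [hN, Finset.sum_eq_add i j hne (fun k _ hk => by rw [hzero k hk.1 hk.2, zero_mul])
      (by simp) (by simp)]
    simp only [frob, iterateFrobenius_def]
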